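/- arXiv:1101.4713 — 2 statements merged into one kernel-verified Lean document; each statement's English description precedes it below -/
import Mathlib

section
/- Let B ∈ M_d(ℤ) with det B ≠ 0, let i, j, k, l ∈ ℕ satisfy i ≥ l and k + i − l = j, and let m, n, p, q ∈ ℤ^d. Then the following are equivalent: (1) there exists x ∈ ℤ^d with p − n = B^l x and m + B^k x − q ∈ B^j ℤ^d; (2) there exists y ∈ ℤ^d with q − m = B^k y and p − B^l y − n ∈ B^i ℤ^d. -/
/-!
Put `e = i - l = j - k`. Since `B ^ j = B ^ k * B ^ e` and `B ^ i = B ^ l * B ^ e`, both conditions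
say that there are a `B ^ l`-preimage `x` of `p - n` and a `B ^ k`-preimage `y` of `q - m` which are
congruent modulo the image of `B ^ e`.
-/

section AddGroup

variable {A G : Type*} [AddGroup A] [AddGroup G]

theorem sub_map_mem_map_iff (f : A →+ G) (S : AddSubgroup A) (u : G) (y : A) :
    u - f y ∈ S.map f ↔ ∃ x, u = f x ∧ x - y ∈ S := by
  constructor
  · rintro ⟨s, hs, hfs⟩
    have hu : u = f (s + y) := by rw [map_add, hfs, sub_add_cancel]
    exact ⟨s + y, hu, by rwa [add_sub_cancel_right]⟩
  · rintro ⟨x, rfl, hxy⟩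
    exact ⟨x - y, hxy, map_sub f x y⟩

theorem map_sub_mem_map_iff (f : A →+ G) (S : AddSubgroup A) (x : A) (v : G) :
    f x - v ∈ S.map f ↔ ∃ y, v = f y ∧ x - y ∈ S := by
  rw [← neg_mem_iff, neg_sub, sub_map_mem_map_iff]
  simp only [← neg_mem_iff (x := x - _), neg_sub]

end AddGroup

theorem coset_conditions_equivalent_general {A G H : Type*} [AddGroup A] [AddCommGroup G]
    [AddCommGroup H] (f : A →+ G) (g : A →+ H) (S : AddSubgroup A) (m q : H) (n p : G) :
    (∃ x, p - n = f x ∧ m + g x - q ∈ S.map g) ↔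
      ∃ y, q - m = g y ∧ p - f y - n ∈ S.map f := by
  calc
    _ ↔ ∃ x, p - n = f x ∧ ∃ y, q - m = g y ∧ x - y ∈ S := by
      simp only [← map_sub_mem_map_iff, sub_sub_eq_add_sub, add_comm m]
    _ ↔ ∃ y, q - m = g y ∧ ∃ x, p - n = f x ∧ x - y ∈ S := by
      simp only [← exists_and_left, and_left_comm]
      exact exists_comm
    _ ↔ _ := by
      simp only [← sub_map_mem_map_iff, sub_right_comm p n]

/-- Let `B ∈ M_d(ℤ)` with `det B ≠ 0`, let `i, j, k, l ∈ ℕ` satisfy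
`i ≥ l` and `k + i - l = j`, and let `m, n, p, q ∈ ℤ^d`.  Then
`(∃ x, p - n = B^l x ∧ m + B^k x - q ∈ B^j ℤ^d)` if and only if
`(∃ y, q - m = B^k y ∧ p - B^l y - n ∈ B^i ℤ^d)`. -/
theorem coset_conditions_equivalent {d : ℕ} (B : Matrix (Fin d) (Fin d) ℤ)
    (hB : B.det ≠ 0) (i j k l : ℕ) (hil : l ≤ i) (hj : k + i - l = j)
    (m n p q : Fin d → ℤ) :
    (∃ x : Fin d → ℤ, p - n = (B ^ l).mulVec x ∧
        ∃ x' : Fin d → ℤ, m + (B ^ k).mulVec x - q = (B ^ j).mulVec x') ↔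
      (∃ y : Fin d → ℤ, q - m = (B ^ k).mulVec y ∧
        ∃ y' : Fin d → ℤ, p - (B ^ l).mulVec y - n = (B ^ i).mulVec y') := by
  obtain ⟨e, rfl, rfl⟩ : ∃ e, i = l + e ∧ j = k + e := ⟨i - l, by omega, by omega⟩
  simpa [pow_add, eq_comm] using coset_conditions_equivalent_general
    (B ^ l).mulVecLin.toAddMonoidHom (B ^ k).mulVecLin.toAddMonoidHom
    (B ^ e).mulVecLin.toAddMonoidHom.range m q n p
end

section
/- Let A ∈ M_d(ℤ) with det A ≠ 0, set B = Aᵀ, and fix r ∈ [0, 1). Suppose μ and ν are Borel probability measures on 𝕋^d such that for every m ∈ ℤ^d, Σ_{j ≥ 0, m ∈ B^jℤ^d} r^j M_μ(B^{−j}m) = Σ_{j ≥ 0, m ∈ B^jℤ^d} r^j M_ν(B^{−j}m), where the (absolutely convergent) sums run over those j ∈ ℕ for which m lies in B^jℤ^d and B^{−j}m denotes the unique x ∈ ℤ^d with m = B^j x. Then μ = ν. -/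
/-!
Write `M(m)` for the moments of a measure, `T` for the map `m ↦ B m` and `S(m)` for the sum of
`r ^ j M(x)` over the pairs `(j, x)` with `T^j x = m`. If `m` is not in the range of `T`, the only
such pair is `(0, m)`, so `S(m) = M(m)`. If `m = T n`, then injectivity of `T` identifies the
remaining pairs with those attached to `n`, so `S(m) = M(m) + r S(n)`. Either way `M` is recovered
from `S`. The characters span a dense subspace of the continuous functions on the torus, hence the
moments determine the measure.
-/

open MeasureTheory

noncomputable section

/-- The `d`-torus `𝕋^d = ℝ^d / ℤ^d`. -/
abbrev Torus (d : ℕ) := Fin d → AddCircle (1 : ℝ)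

/-- The character `γ_m (x + ℤ^d) = exp (2 π i ⟨m, x⟩)` of the `d`-torus. -/
def gammaChar {d : ℕ} (m : Fin d → ℤ) (x : Torus d) : ℂ :=
  ∏ j, (AddCircle.toCircle (m j • x j) : ℂ)

section BackwardOrbit

variable {α : Type*} {T : α → α} {m n : α}

/-- The backward orbit of `m` under `T`: the points whose forward orbit reaches `m`, each recorded
together with the number of steps taken. It is the index set of `backwardSum`. -/
abbrev BackwardOrbit (T : α → α) (m : α) : Type _ :=
  {p : ℕ × α // m = T^[p.1] p.2}

namespace BackwardOrbit

/-- The point `m` of its own backward orbit, reached in zero steps. -/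
def root (T : α → α) (m : α) : BackwardOrbit T m :=
  ⟨(0, m), rfl⟩

/-- The backward orbit of `n` inside that of `T n`: one more step is taken at the end. -/
def shift (p : BackwardOrbit T n) : BackwardOrbit T (T n) :=
  ⟨(p.1.1 + 1, p.1.2), by rw [Function.iterate_succ_apply', ← p.2]⟩

lemma shift_injective : Function.Injective (shift : BackwardOrbit T n → BackwardOrbit T (T n)) := by
  rintro ⟨⟨j, x⟩, hx⟩ ⟨⟨k, y⟩, hy⟩ h
  simpa [shift] using h

lemma eq_root_of_notMem_range (hm : m ∉ Set.range T) (p : BackwardOrbit T m) : p = root T m := by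
  obtain ⟨⟨_ | j, x⟩, hx⟩ := p
  · obtain rfl : m = x := hx
    rfl
  · exact absurd ⟨T^[j] x, by rw [hx, Function.iterate_succ_apply']⟩ hm

lemma isCompl_root_range_shift (hT : Function.Injective T) (n : α) :
    IsCompl {root T (T n)} (Set.range (shift : BackwardOrbit T n → BackwardOrbit T (T n))) := by
  refine ⟨Set.disjoint_singleton_left.mpr ?_, codisjoint_iff.mpr (Set.eq_univ_of_forall ?_)⟩
  · rintro ⟨p, hp⟩
    exact Nat.succ_ne_zero p.1.1 (congrArg (fun q => q.1.1) hp)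
  · rintro ⟨⟨_ | j, x⟩, hx⟩
    · obtain rfl : T n = x := hx
      exact Or.inl rfl
    · rw [Function.iterate_succ_apply'] at hx
      exact Or.inr ⟨⟨(j, x), hT hx⟩, rfl⟩

lemma steps_injective (hT : Function.Injective T) :
    Function.Injective fun p : BackwardOrbit T m => p.1.1 := by
  rintro ⟨⟨j, x⟩, hx⟩ ⟨⟨k, y⟩, hy⟩ (rfl : j = k)
  obtain rfl : x = y := hT.iterate j (hx.symm.trans hy)
  rfl

end BackwardOrbit

end BackwardOrbit

section BackwardSum

open BackwardOrbit

variable {α R E : Type*} {T : α → α}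

/-- The sum of `r ^ j • f x` over all `j` and `x` with `T^[j] x = m`. For injective `T` this is
`∑ j, r ^ j • f (T⁻ʲ m)`, taken over those `j` for which `T⁻ʲ m` exists. It is `0` if the family is
not summable. -/
def backwardSum [Monoid R] [AddCommMonoid E] [SMul R E] [TopologicalSpace E]
    (T : α → α) (r : R) (f : α → E) (m : α) : E :=
  ∑' p : BackwardOrbit T m, r ^ p.1.1 • f p.1.2

lemma backwardSum_of_notMem_range [Monoid R] [AddCommMonoid E] [MulAction R E] [TopologicalSpace E]
    {m : α} (hm : m ∉ Set.range T) (r : R) (f : α → E) : backwardSum T r f m = f m := by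
  rw [backwardSum, tsum_eq_single (root T m) fun p hp => absurd (eq_root_of_notMem_range hm p) hp]
  simp only [root, pow_zero, one_smul]

lemma backwardSum_apply [Monoid R] [AddCommMonoid E] [DistribMulAction R E] [TopologicalSpace E]
    [T2Space E] [ContinuousAdd E] [ContinuousConstSMul R E] (hT : Function.Injective T)
    {r : R} {f : α → E} {n : α}
    (hf : Summable fun p : BackwardOrbit T n => r ^ p.1.1 • f p.1.2) :
    backwardSum T r f (T n) = f (T n) + r • backwardSum T r f n := by
  let term (p : BackwardOrbit T (T n)) : E := r ^ p.1.1 • f p.1.2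
  have hroot : HasSum (term ∘ ((↑) : ({root T (T n)} : Set _) → _)) (f (T n)) := by
    simpa only [term, root, pow_zero, one_smul] using! hasSum_singleton (root T (T n)) term
  have hshift : HasSum (term ∘ ((↑) : Set.range (shift (T := T) (n := n)) → _))
      (r • backwardSum T r f n) := by
    refine shift_injective.hasSum_range_iff.mpr ?_
    simpa only [term, Function.comp_def, shift, pow_succ', mul_smul] using! hf.hasSum.const_smul r
  exact (hroot.add_isCompl (isCompl_root_range_shift hT n) hshift).tsum_eq

lemma summable_backwardOrbit [NormedDivisionRing R] [NormedAddCommGroup E] [Module R E]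
    [NormSMulClass R E] [CompleteSpace E] (hT : Function.Injective T) {r : R} (hr : ‖r‖ < 1)
    {f : α → E} {C : ℝ} (hf : ∀ x, ‖f x‖ ≤ C) (m : α) :
    Summable fun p : BackwardOrbit T m => r ^ p.1.1 • f p.1.2 := by
  refine Summable.of_norm_bounded (g := fun p => ‖r‖ ^ p.1.1 * C)
    (((summable_geometric_of_lt_one (norm_nonneg r) hr).comp_injective
      (steps_injective hT)).mul_right C) fun p => ?_
  rw [norm_smul, norm_pow]
  gcongr
  exact hf _

theorem eq_of_backwardSum_eq [NormedDivisionRing R] [NormedAddCommGroup E] [Module R E]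
    [NormSMulClass R E] [CompleteSpace E] (hT : Function.Injective T) {r : R} (hr : ‖r‖ < 1)
    {f g : α → E} {C D : ℝ} (hf : ∀ x, ‖f x‖ ≤ C) (hg : ∀ x, ‖g x‖ ≤ D)
    (h : ∀ m, backwardSum T r f m = backwardSum T r g m) : f = g := by
  funext m
  by_cases hm : m ∈ Set.range T
  · obtain ⟨n, rfl⟩ := hm
    have key := h (T n)
    rw [backwardSum_apply hT (summable_backwardOrbit hT hr hf n),
      backwardSum_apply hT (summable_backwardOrbit hT hr hg n), h n] at key
    exact add_right_cancel key
  · simpa only [backwardSum_of_notMem_range hm] using h m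

end BackwardSum

section Matrix

variable {ι S : Type*} [Fintype ι] [DecidableEq ι] [Semiring S]

lemma pow_mulVec_eq_iterate (M : Matrix ι ι S) (j : ℕ) (v : ι → S) :
    (M ^ j).mulVec v = M.mulVec^[j] v := by
  induction j with
  | zero => simp
  | succ j ih => rw [pow_succ', ← Matrix.mulVec_mulVec, ih, Function.iterate_succ_apply']

lemma backwardSum_mulVec {R E : Type*} [Monoid R] [AddCommMonoid E] [SMul R E] [TopologicalSpace E]
    (M : Matrix ι ι S) (r : R) (f : (ι → S) → E) (m : ι → S) :
    backwardSum M.mulVec r f m =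
      ∑' p : {p : ℕ × (ι → S) // m = (M ^ p.1).mulVec p.2}, r ^ p.1.1 • f p.1.2 :=
  ((Equiv.subtypeEquivRight fun p => by rw [pow_mulVec_eq_iterate]).tsum_eq
    fun p : BackwardOrbit M.mulVec m => r ^ p.1.1 • f p.1.2).symm

end Matrix

section Moments

variable {X 𝕜 : Type*} [TopologicalSpace X] [CompactSpace X] [MeasurableSpace X] [BorelSpace X]
  [RCLike 𝕜]

lemma integrable_continuousMap {E : Type*} [NormedAddCommGroup E] (μ : Measure X)
    [IsFiniteMeasure μ] (f : C(X, E)) :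
    Integrable f μ :=
  f.continuous.integrable_of_hasCompactSupport (HasCompactSupport.of_compactSpace f)

/-- Integration against a finite measure, as a continuous linear functional on `C(X, 𝕜)`. -/
def integralFunctional (𝕜 : Type*) [RCLike 𝕜] (μ : Measure X) [IsFiniteMeasure μ] :
    C(X, 𝕜) →L[𝕜] 𝕜 :=
  LinearMap.mkContinuous
    { toFun := fun f => ∫ x, f x ∂μ
      map_add' := fun f g =>
        integral_add (integrable_continuousMap μ f) (integrable_continuousMap μ g)
      map_smul' := fun c f => integral_smul c f }
    (μ.real Set.univ) fun f => by
      rw [mul_comm]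
      exact norm_integral_le_of_norm_le_const (.of_forall f.norm_coe_le_norm)

lemma integralFunctional_apply (μ : Measure X) [IsFiniteMeasure μ] (f : C(X, 𝕜)) :
    integralFunctional 𝕜 μ f = ∫ x, f x ∂μ :=
  rfl

theorem measure_ext_of_integral_eq_of_dense_span [HasOuterApproxClosed X] {s : Set C(X, 𝕜)}
    (hs : Dense (Submodule.span 𝕜 s : Set C(X, 𝕜))) (μ ν : Measure X) [IsFiniteMeasure μ]
    [IsFiniteMeasure ν] (h : ∀ f ∈ s, ∫ x, f x ∂μ = ∫ x, f x ∂ν) : μ = ν := by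
  have hfun : integralFunctional 𝕜 μ = integralFunctional 𝕜 ν :=
    ContinuousLinearMap.ext_on hs fun f hf => by simpa only [integralFunctional_apply] using h f hf
  refine ext_of_forall_integral_eq_of_IsFiniteMeasure fun f => ?_
  have hf := DFunLike.congr_fun hfun ⟨fun x => (f x : 𝕜), by fun_prop⟩
  simp only [integralFunctional_apply, ContinuousMap.coe_mk, integral_ofReal] at hf
  exact_mod_cast hf

lemma norm_moment_le {ι : Type*} {γ : ι → C(X, 𝕜)} {C : ℝ} (hC : ∀ m, ‖γ m‖ ≤ C) (μ : Measure X)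
    [IsFiniteMeasure μ] (m : ι) :
    ‖∫ x, γ m x ∂μ‖ ≤ ‖integralFunctional 𝕜 μ‖ * C := by
  rw [← integralFunctional_apply]
  exact (integralFunctional 𝕜 μ).le_opNorm_of_le (hC m)

theorem measures_determined_by_weighted_moments_general [HasOuterApproxClosed X] {ι : Type*}
    {γ : ι → C(X, 𝕜)} (hγ : Dense (Submodule.span 𝕜 (Set.range γ) : Set C(X, 𝕜)))
    {C : ℝ} (hC : ∀ m, ‖γ m‖ ≤ C) {T : ι → ι} (hT : Function.Injective T) {r : 𝕜} (hr : ‖r‖ < 1)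
    (μ ν : Measure X) [IsFiniteMeasure μ] [IsFiniteMeasure ν]
    (H : ∀ m, backwardSum T r (fun n => ∫ x, γ n x ∂μ) m =
      backwardSum T r (fun n => ∫ x, γ n x ∂ν) m) :
    μ = ν := by
  have hmoments := eq_of_backwardSum_eq hT hr (norm_moment_le hC μ) (norm_moment_le hC ν) H
  refine measure_ext_of_integral_eq_of_dense_span hγ μ ν ?_
  rintro _ ⟨m, rfl⟩
  exact congrFun hmoments m

end Moments

/-- Let `A ∈ M_d(ℤ)` with `det A ≠ 0`, `B = Aᵀ`, and fix `r ∈ [0, 1)`.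
If `μ` and `ν` are Borel probability measures on `𝕋^d` such that for every `m ∈ ℤ^d` the sums
`Σ_{j ≥ 0, m ∈ B^j ℤ^d} r^j M_μ(B^{-j} m)` and `Σ_{j ≥ 0, m ∈ B^j ℤ^d} r^j M_ν(B^{-j} m)`
agree (here the sum runs over pairs `(j, x)` with `m = B^j x`; since `det B ≠ 0` the
preimage `x = B^{-j} m` is unique for each admissible `j`), then `μ = ν`. -/
theorem measures_determined_by_weighted_moments {d : ℕ}
    (A : Matrix (Fin d) (Fin d) ℤ) (hA : A.det ≠ 0) (r : ℝ) (hr : r ∈ Set.Ico (0 : ℝ) 1)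
    (μ ν : Measure (Torus d)) [IsProbabilityMeasure μ] [IsProbabilityMeasure ν]
    (H : ∀ m : Fin d → ℤ,
      (∑' p : {p : ℕ × (Fin d → ℤ) // m = (A.transpose ^ p.1).mulVec p.2},
          (r : ℂ) ^ p.1.1 * ∫ z, gammaChar p.1.2 z ∂μ)
        = ∑' p : {p : ℕ × (Fin d → ℤ) // m = (A.transpose ^ p.1).mulVec p.2},
            (r : ℂ) ^ p.1.1 * ∫ z, gammaChar p.1.2 z ∂ν) :
    μ = ν := by
  have hT : Function.Injective A.transpose.mulVec :=
    Matrix.mulVec_injective_of_det_ne_zero (by rwa [Matrix.det_transpose])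
  have hr' : ‖(r : ℂ)‖ < 1 := by rw [Complex.norm_of_nonneg hr.1]; exact hr.2
  have hdense := Submodule.dense_iff_topologicalClosure_eq_top.mpr
    (UnitAddTorus.span_mFourier_closure_eq_top (d := Fin d))
  refine measures_determined_by_weighted_moments_general hdense
    (fun m => UnitAddTorus.mFourier_norm.le) hT hr' μ ν fun m => ?_
  rw [backwardSum_mulVec, backwardSum_mulVec]
  exact H m
end
end
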